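/- For every real ε, every positive integer N (h = 1/N), every vector (ψ₀,…,ψ_{N−1}) ∈ ℂ^N with associated step function ψ_h = Σ_{j=0}^{N−1} ψ_j χ_{j+ε}, and every 1-periodic function u ∈ C²(ℝ, ℂ), one has | Σ_{j=0}^{N−1} ψ_j ( h u(t_{j+ε}) − ∫_{t_{j+ε}−h/2}^{t_{j+ε}+h/2} u(t) dt ) | ≤ (1/2) (π h)² ‖ψ_h‖₀ ‖u‖₂. -/

import Mathlib

/-!
The midpoint rule on an interval of length `h` centred at `a` has the Peano representation
`∫ u − h u(a) = ∫ K u''` with `0 ≤ K(t) = (h/2 − |t − a|)²/2 ≤ h²/8`, so the error at the `j`-th node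
is at most `(h²/8) ∫_{I_j} |u''|` (`norm_midpoint_error_le`), and by Cauchy–Schwarz on `I_j` at most
`(h²/8) h^{1/2} ‖u''‖_{L²(I_j)}`. The intervals `I_j` tile one period, so Cauchy–Schwarz for the sum
over `j` bounds the left-hand side by `(h²/8) ‖ψ_h‖₀ ‖u''‖_{L²(0,1)}`. Parseval and
`(u'')^(m) = (2πim)² û(m)` give `‖u''‖_{L²(0,1)} ≤ (2π)² ‖u‖₂` (`integral_sq_deriv2_le`), and
`(2π)²/8 = π²/2` is exactly the constant claimed.
-/

noncomputable section

/-- Smooth kernel data, 1-periodic in each variable. -/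
def SPK (A : ℝ → ℝ → ℂ) : Prop :=
  ContDiff ℝ (⊤ : ℕ∞) (fun p : ℝ × ℝ => A p.1 p.2) ∧
    (∀ s t, A (s + 1) t = A s t) ∧ (∀ s t, A s (t + 1) = A s t)

/-- Logarithmic kernel `V(s,t) = (i/(2π)) A(s,t) log(sin²(π(s−t))) + K(s,t)`. -/
def logKer (A K : ℝ → ℝ → ℂ) (s t : ℝ) : ℂ :=
  Complex.I / (2 * Real.pi) * A s t * (Real.log (Real.sin (Real.pi * (s - t)) ^ 2) : ℂ) + K s t

/-- Grid point `s_{j+ε} = (j − 1/2 + ε)h`. -/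
def sg (h ε : ℝ) (j : ℤ) : ℝ := ((j : ℝ) - 1 / 2 + ε) * h

/-- Grid point `t_{j+ε} = (j + ε)h`. -/
def tg (h ε : ℝ) (j : ℤ) : ℝ := ((j : ℝ) + ε) * h

/-- Integral operator with kernel `V`. -/
def Vop (V : ℝ → ℝ → ℂ) (φ : ℝ → ℂ) (s : ℝ) : ℂ := ∫ t in (0:ℝ)..1, V s t * φ t

/-- Hypersingular operator `W = −D V₁ D + V₂`. -/
def Wop (V1 V2 : ℝ → ℝ → ℂ) (φ : ℝ → ℂ) (s : ℝ) : ℂ :=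
  -deriv (Vop V1 (deriv φ)) s + Vop V2 φ s

/-- Nyström matrix entries `W^ε_{ij}`. -/
def Wmat (V1 V2 : ℝ → ℝ → ℂ) (h ε : ℝ) (i j : ℤ) : ℂ :=
  V1 (sg h ε (i + 1)) (sg h 0 (j + 1)) - V1 (sg h ε i) (sg h 0 (j + 1))
    - V1 (sg h ε (i + 1)) (sg h 0 j) + V1 (sg h ε i) (sg h 0 j)
    + (h : ℂ) ^ 2 * V2 (tg h ε i) (tg h 0 j)

/-- Fourier coefficient of a 1-periodic function. -/
def fc (u : ℝ → ℂ) (m : ℤ) : ℂ :=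
  ∫ t in (0:ℝ)..1, u t * Complex.exp (-(2 * Real.pi * Complex.I * (m : ℂ) * (t : ℂ)))

/-- Periodic Sobolev norm of order `r`. -/
def sobNorm (r : ℝ) (u : ℝ → ℂ) : ℝ :=
  Real.sqrt (‖fc u 0‖ ^ 2 +
    ∑' m : ℤ, if m = 0 then 0 else |(m : ℝ)| ^ (2 * r) * ‖fc u m‖ ^ 2)

/-- 1-periodic step function on the ε-shifted grid with coefficients `v`. -/
def stepf (N : ℕ) (ε : ℝ) (v : ZMod N → ℂ) (s : ℝ) : ℂ :=
  v ((⌊s * N + 1 / 2 - ε⌋ : ℤ) : ZMod N)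

/-- Midpoint quadrature error matrix entries `E^ε_{ij}`. -/
def Emat (V2 : ℝ → ℝ → ℂ) (h ε : ℝ) (i j : ℤ) : ℂ :=
  (∫ s in (sg h ε i)..(sg h ε (i + 1)), ∫ t in (sg h 0 j)..(sg h 0 (j + 1)), V2 s t)
    - (h : ℂ) ^ 2 * V2 (tg h ε i) (tg h 0 j)

/-- Spectral (ℓ²-operator) norm of a complex `N×N` matrix. -/
def specNorm {N : ℕ} (M : Matrix (Fin N) (Fin N) ℂ) : ℝ :=
  ‖LinearMap.toContinuousLinearMap (Matrix.toEuclideanLin M)‖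

/-- The function `C̄₁(t) = −(1/(2πi)) log(4 sin²(πt))`. -/
def Cbar1 (t : ℝ) : ℂ :=
  -(1 / (2 * Real.pi * Complex.I)) * (Real.log (4 * Real.sin (Real.pi * t) ^ 2) : ℂ)

end

/-- Two integrations by parts: `(t-c)²/2 · u' − (t-c) · u + ∫ u` is an antiderivative of
`(t-c)²/2 · u''`. -/
lemma integral_sq_mul_deriv2 {u : ℝ → ℂ} (hu : ContDiff ℝ 2 u) (c p q : ℝ) :
    ∫ t in p..q, (((t - c) ^ 2 / 2 : ℝ) : ℂ) * deriv (deriv u) t =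
      (((q - c) ^ 2 / 2 : ℝ) : ℂ) * deriv u q - ((q - c : ℝ) : ℂ) * u q
      - ((((p - c) ^ 2 / 2 : ℝ) : ℂ) * deriv u p - ((p - c : ℝ) : ℂ) * u p)
      + ∫ t in p..q, u t := by
  have hu1 : ContDiff ℝ 1 (deriv u) := hu.deriv' (n := 1)
  have hg : Continuous (deriv (deriv u)) := hu1.continuous_deriv le_rfl
  have hd : ∀ t, HasDerivAt (fun t => (((t - c) ^ 2 / 2 : ℝ) : ℂ) * deriv u t
      - ((t - c : ℝ) : ℂ) * u t + ∫ x in p..t, u x)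
      ((((t - c) ^ 2 / 2 : ℝ) : ℂ) * deriv (deriv u) t) t := by
    intro t
    have h0 : HasDerivAt u (deriv u t) t := (hu.differentiable (by norm_num) t).hasDerivAt
    have h1 : HasDerivAt (deriv u) (deriv (deriv u) t) t :=
      (hu1.differentiable (by norm_num) t).hasDerivAt
    have h2 : HasDerivAt (fun t => ∫ x in p..t, u x) (u t) t :=
      hu.continuous.integral_hasStrictDerivAt p t |>.hasDerivAt
    have h3 : HasDerivAt (fun t : ℝ => t - c) 1 t := (hasDerivAt_id t).sub_const c
    have h4 : HasDerivAt (fun t : ℝ => (t - c) ^ 2 / 2) (t - c) t :=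
      ((h3.pow 2).div_const 2).congr_deriv (by norm_num)
    refine (((h4.ofReal_comp.mul h1).sub (h3.ofReal_comp.mul h0)).add h2).congr_deriv ?_
    push_cast
    ring
  rw [intervalIntegral.integral_eq_sub_of_hasDerivAt (fun t _ => hd t)
    (Continuous.intervalIntegrable (by fun_prop) _ _)]
  simp only [intervalIntegral.integral_same]
  ring

lemma norm_integral_sq_mul_le {g : ℝ → ℂ} (hg : Continuous g) {c p q δ : ℝ} (hpq : p ≤ q)
    (hc : ∀ t ∈ Set.Icc p q, |t - c| ≤ δ) :
    ‖∫ t in p..q, (((t - c) ^ 2 / 2 : ℝ) : ℂ) * g t‖ ≤ δ ^ 2 / 2 * ∫ t in p..q, ‖g t‖ := by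
  rw [← intervalIntegral.integral_const_mul]
  refine (intervalIntegral.norm_integral_le_integral_norm hpq).trans
    (intervalIntegral.integral_mono_on hpq (Continuous.intervalIntegrable (by fun_prop) _ _)
      (Continuous.intervalIntegrable (by fun_prop) _ _) fun t ht => ?_)
  rw [norm_mul, Complex.norm_real, Real.norm_of_nonneg (by positivity)]
  have : (t - c) ^ 2 ≤ δ ^ 2 := by
    rw [← sq_abs]
    exact pow_le_pow_left₀ (abs_nonneg _) (hc t ht) 2
  gcongr

/-- Peano estimate for the midpoint rule on `[a - δ, a + δ]`. The kernel is a different parabola on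
each half of the interval; the boundary terms in `u'(a)` cancel. -/
lemma norm_midpoint_error_le {u : ℝ → ℂ} (hu : ContDiff ℝ 2 u) (a : ℝ) {δ : ℝ} (hδ : 0 ≤ δ) :
    ‖((2 * δ : ℝ) : ℂ) * u a - ∫ t in (a - δ)..(a + δ), u t‖ ≤
      δ ^ 2 / 2 * ∫ t in (a - δ)..(a + δ), ‖deriv (deriv u) t‖ := by
  have hg : Continuous (deriv (deriv u)) := (hu.deriv' (n := 1)).continuous_deriv le_rfl
  have hl := integral_sq_mul_deriv2 hu (a - δ) (a - δ) a
  have hr := integral_sq_mul_deriv2 hu (a + δ) a (a + δ)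
  have bl := norm_integral_sq_mul_le hg (c := a - δ) (p := a - δ) (q := a) (δ := δ) (by linarith)
    (fun t ht => abs_le.2 ⟨by linarith [ht.1], by linarith [ht.2]⟩)
  have br := norm_integral_sq_mul_le hg (c := a + δ) (p := a) (q := a + δ) (δ := δ) (by linarith)
    (fun t ht => abs_le.2 ⟨by linarith [ht.1], by linarith [ht.2]⟩)
  have hsu := intervalIntegral.integral_add_adjacent_intervals
    (hu.continuous.intervalIntegrable (μ := MeasureTheory.volume) (a - δ) a)
    (hu.continuous.intervalIntegrable a (a + δ))
  have hsg := intervalIntegral.integral_add_adjacent_intervals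
    (hg.norm.intervalIntegrable (μ := MeasureTheory.volume) (a - δ) a)
    (hg.norm.intervalIntegrable a (a + δ))
  have key : ((2 * δ : ℝ) : ℂ) * u a - ∫ t in (a - δ)..(a + δ), u t =
      -((∫ t in (a - δ)..a, (((t - (a - δ)) ^ 2 / 2 : ℝ) : ℂ) * deriv (deriv u) t) +
        ∫ t in a..(a + δ), (((t - (a + δ)) ^ 2 / 2 : ℝ) : ℂ) * deriv (deriv u) t) := by
    rw [hl, hr, ← hsu]
    push_cast
    ring
  rw [key, norm_neg, ← hsg, mul_add]
  exact (norm_add_le _ _).trans (add_le_add bl br)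

/-- Cauchy–Schwarz against the constant `1`, from `∫ ((q - p) g - ∫ g)² ≥ 0`. -/
lemma sq_integral_le_mul_integral_sq {g : ℝ → ℝ} (hg : Continuous g) {p q : ℝ} (hpq : p < q) :
    (∫ t in p..q, g t) ^ 2 ≤ (q - p) * ∫ t in p..q, g t ^ 2 := by
  set G := ∫ t in p..q, g t with hG
  have h0 : 0 ≤ ∫ t in p..q, ((q - p) * g t - G) ^ 2 :=
    intervalIntegral.integral_nonneg hpq.le fun t _ => sq_nonneg _
  have h1 : ∫ t in p..q, ((q - p) * g t - G) ^ 2 =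
      (q - p) ^ 2 * (∫ t in p..q, g t ^ 2) - 2 * (q - p) * G * G + (q - p) * G ^ 2 := by
    have : ∀ t, ((q - p) * g t - G) ^ 2 =
        (q - p) ^ 2 * g t ^ 2 - 2 * (q - p) * G * g t + G ^ 2 := fun t => by ring
    simp only [this]
    rw [intervalIntegral.integral_add (Continuous.intervalIntegrable (by fun_prop) _ _)
      (Continuous.intervalIntegrable (by fun_prop) _ _),
      intervalIntegral.integral_sub (Continuous.intervalIntegrable (by fun_prop) _ _)
      (Continuous.intervalIntegrable (by fun_prop) _ _),
      intervalIntegral.integral_const_mul, intervalIntegral.integral_const_mul,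
      intervalIntegral.integral_const, ← hG, smul_eq_mul]
  rw [h1] at h0
  have hpos : 0 < q - p := sub_pos.2 hpq
  have : 0 ≤ (q - p) * ((q - p) * (∫ t in p..q, g t ^ 2) - G ^ 2) := by nlinarith
  linarith [nonneg_of_mul_nonneg_right this hpos]

lemma fc_eq_fourierCoeffOn (v : ℝ → ℂ) (m : ℤ) :
    fc v m = fourierCoeffOn (zero_lt_one (α := ℝ)) v m := by
  rw [fourierCoeffOn_eq_integral, fc]
  simp only [sub_zero, div_one, one_smul, smul_eq_mul]
  refine intervalIntegral.integral_congr fun t _ => ?_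
  rw [mul_comm, fourier_coe_apply]
  congr 2
  push_cast
  ring

lemma fc_deriv {v : ℝ → ℂ} (hv : ContDiff ℝ 1 v) (hper : Function.Periodic v 1) (m : ℤ) :
    fc (deriv v) m = 2 * Real.pi * Complex.I * m * fc v m := by
  have hd : ∀ t, HasDerivAt v (deriv v t) t := fun t =>
    (hv.differentiable (by norm_num) t).hasDerivAt
  have hint : IntervalIntegrable (deriv v) MeasureTheory.volume 0 1 :=
    (hv.continuous_deriv le_rfl).intervalIntegrable _ _
  have hv01 : v 1 = v 0 := by simpa using hper 0
  rcases eq_or_ne m 0 with rfl | hm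
  · simp [fc, intervalIntegral.integral_eq_sub_of_hasDerivAt (fun t _ => hd t) hint, hv01]
  · have h := fourierCoeffOn_of_hasDerivAt (zero_lt_one (α := ℝ)) hm (fun t _ => hd t) hint
    rw [← fc_eq_fourierCoeffOn, ← fc_eq_fourierCoeffOn, hv01] at h
    have hpi : (Real.pi : ℂ) ≠ 0 := by exact_mod_cast Real.pi_ne_zero
    have hmC : (m : ℂ) ≠ 0 := by exact_mod_cast hm
    rw [h]
    field_simp
    push_cast
    ring

lemma periodic_deriv {v : ℝ → ℂ} (hper : Function.Periodic v 1) :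
    Function.Periodic (deriv v) 1 := by
  intro t
  rw [← deriv_comp_add_const]
  congr 1
  exact funext hper

/-- Parseval for `u''`: `‖u''‖_{L²(0,1)} ≤ (2π)² ‖u‖₂`, squared. -/
lemma integral_sq_deriv2_le {u : ℝ → ℂ} (hu : ContDiff ℝ 2 u) (hper : Function.Periodic u 1) :
    ∫ t in (0:ℝ)..1, ‖deriv (deriv u) t‖ ^ 2 ≤ ((2 * Real.pi) ^ 2 * sobNorm 2 u) ^ 2 := by
  have hu1 : ContDiff ℝ 1 (deriv u) := hu.deriv' (n := 1)
  have hg : Continuous (deriv (deriv u)) := hu1.continuous_deriv le_rfl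
  have hL2 : MeasureTheory.MemLp (deriv (deriv u)) 2
      (MeasureTheory.volume.restrict (Set.Ioc (0:ℝ) 1)) :=
    (MeasureTheory.memLp_two_iff_integrable_sq_norm hg.aestronglyMeasurable).2
      (hg.norm.pow 2).integrableOn_Ioc
  have hP := tsum_sq_fourierCoeffOn (zero_lt_one (α := ℝ)) hL2
  simp only [sub_zero, inv_one, one_smul, ← fc_eq_fourierCoeffOn] at hP
  have hterm : ∀ m : ℤ, ‖fc (deriv (deriv u)) m‖ ^ 2 = ((2 * Real.pi) ^ 2) ^ 2 *
      (if m = 0 then 0 else |(m : ℝ)| ^ (2 * (2 : ℝ)) * ‖fc u m‖ ^ 2) := by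
    intro m
    rw [fc_deriv hu1 (periodic_deriv hper), fc_deriv (hu.of_le (by norm_num)) hper]
    split_ifs with hm
    · simp [hm]
    · have : |(m : ℝ)| ^ (2 * (2 : ℝ)) = |(m : ℝ)| ^ 4 := by
        rw [← Real.rpow_natCast]; norm_num
      rw [this]
      simp only [norm_mul, Complex.norm_real, Complex.norm_I, Complex.norm_intCast,
        Complex.norm_ofNat, Real.norm_of_nonneg Real.pi_pos.le]
      ring
  rw [← hP, tsum_congr hterm, tsum_mul_left, mul_pow _ (sobNorm 2 u)]
  have hnn : 0 ≤ ∑' m : ℤ, if m = 0 then 0 else |(m : ℝ)| ^ (2 * (2 : ℝ)) * ‖fc u m‖ ^ 2 :=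
    tsum_nonneg fun m => by split_ifs <;> positivity
  rw [sobNorm, Real.sq_sqrt (by positivity)]
  gcongr
  linarith [sq_nonneg ‖fc u 0‖]

lemma sum_zmod_val (N : ℕ) [NeZero N] (F : ℕ → ℝ) :
    ∑ j : ZMod N, F j.val = ∑ k ∈ Finset.range N, F k := by
  obtain ⟨n, rfl⟩ := Nat.exists_eq_succ_of_ne_zero (NeZero.ne N)
  exact Fin.sum_univ_eq_sum_range F (n + 1)

/-- The intervals of length `1/N` around the nodes tile one period. -/
lemma sum_integral_cells (ε : ℝ) (N : ℕ) [NeZero N] {g : ℝ → ℝ} (hg : Continuous g)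
    (hper : Function.Periodic g 1) :
    ∑ j : ZMod N, ∫ t in (tg (1 / (N : ℝ)) ε ((j.val : ℕ) : ℤ) - 1 / (2 * (N : ℝ)))..(
        tg (1 / (N : ℝ)) ε ((j.val : ℕ) : ℤ) + 1 / (2 * (N : ℝ))), g t =
      ∫ t in (0:ℝ)..1, g t := by
  have hN : (N : ℝ) ≠ 0 := by exact_mod_cast NeZero.ne N
  rw [sum_zmod_val N (fun k => ∫ t in (tg (1 / (N : ℝ)) ε (k : ℤ) - 1 / (2 * (N : ℝ)))..(
        tg (1 / (N : ℝ)) ε (k : ℤ) + 1 / (2 * (N : ℝ))), g t)]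
  have hcell : ∀ k : ℕ, tg (1 / (N : ℝ)) ε (k : ℤ) + 1 / (2 * (N : ℝ)) =
      tg (1 / (N : ℝ)) ε ((k + 1 : ℕ) : ℤ) - 1 / (2 * (N : ℝ)) := by
    intro k
    simp only [tg]
    push_cast
    field_simp
    ring
  simp only [hcell]
  rw [intervalIntegral.sum_integral_adjacent_intervals
    (a := fun k : ℕ => tg (1 / (N : ℝ)) ε (k : ℤ) - 1 / (2 * (N : ℝ)))
    (fun k _ => hg.intervalIntegrable _ _)]
  have hend : tg (1 / (N : ℝ)) ε ((N : ℕ) : ℤ) - 1 / (2 * (N : ℝ)) =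
      tg (1 / (N : ℝ)) ε ((0 : ℕ) : ℤ) - 1 / (2 * (N : ℝ)) + 1 := by
    simp only [tg]
    push_cast
    field_simp
    ring
  rw [hend, hper.intervalIntegral_add_eq _ 0, zero_add]

/-- midpoint quadrature tested against a step function:
`|Σ_j ψ_j (h u(t_{j+ε}) − ∫ u)| ≤ ½ (π h)² ‖ψ_h‖₀ ‖u‖₂`. -/
theorem stmt_9
    (ε : ℝ) (N : ℕ) [NeZero N] (ψ : ZMod N → ℂ)
    (u : ℝ → ℂ) (hu : ContDiff ℝ 2 u) (hper : Function.Periodic u 1) :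
    ‖∑ j : ZMod N, ψ j *
        ((1 / (N : ℂ)) * u (tg (1 / (N : ℝ)) ε ((j.val : ℕ) : ℤ))
          - ∫ t in (tg (1 / (N : ℝ)) ε ((j.val : ℕ) : ℤ) - 1 / (2 * (N : ℝ)))..(
              tg (1 / (N : ℝ)) ε ((j.val : ℕ) : ℤ) + 1 / (2 * (N : ℝ))), u t)‖ ≤
      1 / 2 * (Real.pi * (1 / (N : ℝ))) ^ 2
        * Real.sqrt ((1 / (N : ℝ)) * ∑ j : ZMod N, ‖ψ j‖ ^ 2) * sobNorm 2 u := by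
  have hg : Continuous (deriv (deriv u)) := (hu.deriv' (n := 1)).continuous_deriv le_rfl
  have hNpos : (0 : ℝ) < N := by exact_mod_cast Nat.pos_of_ne_zero (NeZero.ne N)
  set δ : ℝ := 1 / (2 * (N : ℝ)) with hδ
  have hδpos : 0 < δ := by positivity
  have h2δ : ((2 * δ : ℝ) : ℂ) = 1 / (N : ℂ) := by
    rw [hδ]; push_cast; field_simp
  set a : ZMod N → ℝ := fun j => tg (1 / (N : ℝ)) ε ((j.val : ℕ) : ℤ) with ha
  set X : ZMod N → ℝ := fun j => ∫ t in (a j - δ)..(a j + δ), ‖deriv (deriv u) t‖ with hX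
  have hstep : ‖∑ j : ZMod N, ψ j * ((1 / (N : ℂ)) * u (a j) -
      ∫ t in (a j - δ)..(a j + δ), u t)‖ ≤ δ ^ 2 / 2 * ∑ j, ‖ψ j‖ * X j := by
    rw [Finset.mul_sum]
    refine norm_sum_le_of_le _ fun j _ => ?_
    rw [norm_mul, ← h2δ, mul_left_comm]
    exact mul_le_mul_of_nonneg_left (norm_midpoint_error_le hu (a j) hδpos.le) (norm_nonneg _)
  have hXsum : ∑ j, X j ^ 2 ≤ 1 / (N : ℝ) * ((2 * Real.pi) ^ 2 * sobNorm 2 u) ^ 2 := by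
    calc ∑ j, X j ^ 2
        ≤ ∑ j, 1 / (N : ℝ) * ∫ t in (a j - δ)..(a j + δ), ‖deriv (deriv u) t‖ ^ 2 := by
          refine Finset.sum_le_sum fun j _ => ?_
          have := sq_integral_le_mul_integral_sq hg.norm (p := a j - δ) (q := a j + δ)
            (by linarith)
          have hlen : a j + δ - (a j - δ) = 1 / (N : ℝ) := by
            rw [hδ]; field_simp; ring
          rwa [hlen] at this
      _ = 1 / (N : ℝ) * ∫ t in (0:ℝ)..1, ‖deriv (deriv u) t‖ ^ 2 := by
          rw [← Finset.mul_sum, ← sum_integral_cells ε N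
            (g := fun t => ‖deriv (deriv u) t‖ ^ 2) (by fun_prop) fun t => by
            simp only [periodic_deriv (periodic_deriv hper) t]]
      _ ≤ _ := by
          gcongr
          exact integral_sq_deriv2_le hu hper
  have hsob : 0 ≤ sobNorm 2 u := Real.sqrt_nonneg _
  have hCS : ∑ j, ‖ψ j‖ * X j ≤
      √(1 / (N : ℝ) * ∑ j, ‖ψ j‖ ^ 2) * ((2 * Real.pi) ^ 2 * sobNorm 2 u) := by
    refine (Real.sum_mul_le_sqrt_mul_sqrt _ _ _).trans
      ((mul_le_mul_of_nonneg_left (Real.sqrt_le_sqrt hXsum) (Real.sqrt_nonneg _)).trans_eq ?_)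
    rw [Real.sqrt_mul (by positivity), Real.sqrt_mul (by positivity),
      Real.sqrt_sq (by positivity)]
    ring
  refine hstep.trans ((mul_le_mul_of_nonneg_left hCS (by positivity)).trans_eq ?_)
  rw [hδ]
  field_simp
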